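/- Let V be a finite vertex set, let w be a weight function on V with values in ℕ ∪ {∞}, let s, t ∈ V, let h ≥ 1 be an integer, and let ρ > 0 be rational. Define the weight function w' on the same edges by w'(u,v) = ⌈w(u,v)/ρ⌉. If d_w^h(s,t) < ∞, then d_w^h(s,t) ≤ ρ·d_{w'}^h(s,t) ≤ d_w^h(s,t) + h·ρ. -/

import Mathlib

/-!
Rounding each edge weight up to a multiple of `ρ` gives `w ≤ ρ * w' ≤ w + ρ` on every edge, so
along a walk with at most `h` hops the length changes by an amount between `0` and `h * ρ`
(`round_weight`, `walkLen_bounds`). The weights `w` and `w'` have the same edges, hence the same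
paths. Weights in `ℕ∞` are well-ordered, so both `h`-hop distances are attained
(`exists_walkLen_eq_hdist`); comparing a shortest path for one weight with its length under the
other weight gives the two inequalities.
-/

open scoped ENNReal ENat

namespace Paper

variable {V : Type*} {α : Type*}

/-- The length of a walk `l` (a list of vertices) under weight `w`:
the sum of the weights of consecutive pairs. -/
def walkLen [AddCommMonoid α] (w : V → V → α) (l : List V) : α :=
  ((l.zip l.tail).map fun p => w p.1 p.2).sum

/-- `l` is a path from `s` to `t` in the weighted digraph `w`: nonempty,
starts at `s`, ends at `t`, and every consecutive pair is an edge (finite weight). -/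
def IsPathFrom [AddCommMonoid α] [CompleteLattice α]
    (w : V → V → α) (s t : V) (l : List V) : Prop :=
  l ≠ [] ∧ l.head? = some s ∧ l.getLast? = some t ∧ l.Chain' (fun u v => w u v ≠ ⊤)

/-- The distance from `s` to `t`: the infimum of lengths of paths from `s` to `t`
(`⊤` if there is no path). -/
noncomputable def dist [AddCommMonoid α] [CompleteLattice α]
    (w : V → V → α) (s t : V) : α :=
  sInf {x | ∃ l, IsPathFrom w s t l ∧ walkLen w l = x}

/-- The `h`-hop distance from `s` to `t`: the infimum of lengths of paths
from `s` to `t` with at most `h` hops. -/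
noncomputable def hdist [AddCommMonoid α] [CompleteLattice α]
    (h : ℕ) (w : V → V → α) (s t : V) : α :=
  sInf {x | ∃ l, IsPathFrom w s t l ∧ l.length ≤ h + 1 ∧ walkLen w l = x}

/-- Rounding up one weight to a multiple of `ρ` never decreases it and adds at most `ρ`.
Both inequalities also hold, as `⊤ ≤ ⊤`, on absent edges. -/
lemma round_weight (a a' : ℕ∞) (ρ : ℚ) (hρ : 0 < ρ)
    (ha : a' = if a = ⊤ then ⊤ else ((⌈(a.toNat : ℚ) / ρ⌉₊ : ℕ) : ℕ∞)) :
    (a : ℝ≥0∞) ≤ ENNReal.ofReal (ρ : ℝ) * (a' : ℝ≥0∞) ∧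
      ENNReal.ofReal (ρ : ℝ) * (a' : ℝ≥0∞) ≤ (a : ℝ≥0∞) + ENNReal.ofReal (ρ : ℝ) := by
  have hρR : (0 : ℝ) < (ρ : ℝ) := by exact_mod_cast hρ
  induction a using ENat.recTopCoe with
  | top =>
    subst ha
    simp [ENNReal.mul_top, hρ]
  | coe n =>
    have ha2 : a' = ((⌈(n : ℚ) / ρ⌉₊ : ℕ) : ℕ∞) := by simpa using ha
    subst ha2
    have h1 : (n : ℚ) ≤ ρ * (⌈(n : ℚ) / ρ⌉₊ : ℕ) := by
      rw [mul_comm, ← div_le_iff₀ hρ]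
      exact Nat.le_ceil _
    have h2 : ρ * (⌈(n : ℚ) / ρ⌉₊ : ℕ) ≤ n + ρ := by
      have h3 := (Nat.ceil_lt_add_one (a := (n : ℚ) / ρ) (by positivity)).le
      calc ρ * (⌈(n : ℚ) / ρ⌉₊ : ℕ) ≤ ρ * ((n : ℚ) / ρ + 1) := by gcongr
        _ = n + ρ := by field_simp
    have h1R : (n : ℝ) ≤ (ρ : ℝ) * (⌈(n : ℚ) / ρ⌉₊ : ℕ) := by exact_mod_cast h1
    have h2R : (ρ : ℝ) * (⌈(n : ℚ) / ρ⌉₊ : ℕ) ≤ n + ρ := by exact_mod_cast h2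
    rw [ENat.toENNReal_coe, ENat.toENNReal_coe, ← ENNReal.ofReal_natCast n,
      ← ENNReal.ofReal_natCast (⌈(n : ℚ) / ρ⌉₊), ← ENNReal.ofReal_mul hρR.le,
      ← ENNReal.ofReal_add (Nat.cast_nonneg n) hρR.le]
    exact ⟨ENNReal.ofReal_le_ofReal h1R, ENNReal.ofReal_le_ofReal h2R⟩

lemma walkLen_cons_cons [AddCommMonoid α] (w : V → V → α) (u v : V) (l : List V) :
    walkLen w (u :: v :: l) = w u v + walkLen w (v :: l) := by
  simp [walkLen]

/-- Edgewise bounds on `r * w'` add up along a walk; the additive error is `r` per hop.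
The hop count is written `l.length - 1`, which is also correct (namely `0`) for the empty list. -/
lemma walkLen_bounds (w w' : V → V → ℕ∞) (r : ℝ≥0∞)
    (hw : ∀ u v, (w u v : ℝ≥0∞) ≤ r * (w' u v : ℝ≥0∞) ∧
      r * (w' u v : ℝ≥0∞) ≤ (w u v : ℝ≥0∞) + r) (l : List V) :
    ((walkLen w l : ℕ∞) : ℝ≥0∞) ≤ r * ((walkLen w' l : ℕ∞) : ℝ≥0∞) ∧
      r * ((walkLen w' l : ℕ∞) : ℝ≥0∞) ≤
        ((walkLen w l : ℕ∞) : ℝ≥0∞) + ((l.length - 1 : ℕ) : ℝ≥0∞) * r := by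
  induction l with
  | nil => simp [walkLen]
  | cons u l ih =>
    cases l with
    | nil => simp [walkLen]
    | cons v l =>
      obtain ⟨ih1, ih2⟩ := ih
      obtain ⟨e1, e2⟩ := hw u v
      simp only [walkLen_cons_cons, ENat.toENNReal_add, mul_add]
      refine ⟨add_le_add e1 ih1, (add_le_add e2 ih2).trans (le_of_eq ?_)⟩
      simp only [List.length_cons, Nat.add_sub_cancel]
      push_cast
      ring

lemma isPathFrom_congr (w w' : V → V → ℕ∞) (hw : ∀ u v, w' u v = ⊤ ↔ w u v = ⊤)
    (s t : V) (l : List V) : IsPathFrom w' s t l ↔ IsPathFrom w s t l := by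
  simp only [IsPathFrom, ne_eq, hw]

lemma hdist_le (w : V → V → ℕ∞) {s t : V} {h : ℕ} {l : List V}
    (hl : IsPathFrom w s t l) (hlen : l.length ≤ h + 1) : hdist h w s t ≤ walkLen w l :=
  sInf_le ⟨l, hl, hlen, rfl⟩

/-- Since `ℕ∞` is well-ordered, the infimum defining the `h`-hop distance is attained
as soon as some path with at most `h` hops exists. -/
lemma exists_walkLen_eq_hdist (w : V → V → ℕ∞) {s t : V} {h : ℕ}
    (hne : ∃ l, IsPathFrom w s t l ∧ l.length ≤ h + 1) :
    ∃ l, IsPathFrom w s t l ∧ l.length ≤ h + 1 ∧ walkLen w l = hdist h w s t := by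
  obtain ⟨l, hl, hlen⟩ := hne
  exact csInf_mem (s := {x | ∃ l, IsPathFrom w s t l ∧ l.length ≤ h + 1 ∧ walkLen w l = x})
    ⟨_, l, hl, hlen, rfl⟩

lemma exists_path_of_hdist_ne_top (w : V → V → ℕ∞) {s t : V} {h : ℕ}
    (hfin : hdist h w s t ≠ ⊤) : ∃ l, IsPathFrom w s t l ∧ l.length ≤ h + 1 := by
  by_contra! hcon
  refine hfin (sInf_eq_top.2 ?_)
  rintro x ⟨l, hl, hlen, -⟩
  exact absurd hlen (hcon l hl).not_ge

/-- With `w'(u,v) = ⌈w(u,v)/ρ⌉` on edges, if `d_w^h(s,t) < ∞` then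
`d_w^h(s,t) ≤ ρ·d_{w'}^h(s,t) ≤ d_w^h(s,t) + h·ρ`. -/
theorem statement14 {V : Type*} [Fintype V]
    (w : V → V → ℕ∞) (s t : V) (h : ℕ) (hh : 1 ≤ h)
    (ρ : ℚ) (hρ : 0 < ρ)
    (w' : V → V → ℕ∞)
    (hw' : ∀ u v : V, w' u v = if w u v = ⊤ then ⊤ else
      ((⌈((w u v).toNat : ℚ) / ρ⌉₊ : ℕ) : ℕ∞))
    (hfin : hdist h w s t ≠ ⊤) :
    ((hdist h w s t : ℕ∞) : ℝ≥0∞)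
        ≤ ENNReal.ofReal (ρ : ℝ) * ((hdist h w' s t : ℕ∞) : ℝ≥0∞) ∧
    ENNReal.ofReal (ρ : ℝ) * ((hdist h w' s t : ℕ∞) : ℝ≥0∞)
        ≤ ((hdist h w s t : ℕ∞) : ℝ≥0∞) + (h : ℝ≥0∞) * ENNReal.ofReal (ρ : ℝ) := by
  have htop : ∀ u v, w' u v = ⊤ ↔ w u v = ⊤ := by
    intro u v
    rw [hw']
    split_ifs with hc <;> simp [hc]
  have hpath := isPathFrom_congr w w' htop s t
  have hbd := walkLen_bounds w w' (ENNReal.ofReal (ρ : ℝ))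
    fun u v => round_weight (w u v) (w' u v) ρ hρ (hw' u v)
  have hne := exists_path_of_hdist_ne_top w hfin
  constructor
  · obtain ⟨l, hl, hlen, heq⟩ := exists_walkLen_eq_hdist w' (s := s) (t := t) (h := h)
      (by simpa only [hpath] using hne)
    rw [← heq]
    exact (ENat.toENNReal_le.2 (hdist_le w ((hpath l).1 hl) hlen)).trans (hbd l).1
  · obtain ⟨l, hl, hlen, heq⟩ := exists_walkLen_eq_hdist w hne
    rw [← heq]
    calc ENNReal.ofReal (ρ : ℝ) * ((hdist h w' s t : ℕ∞) : ℝ≥0∞)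
        ≤ ENNReal.ofReal (ρ : ℝ) * ((walkLen w' l : ℕ∞) : ℝ≥0∞) := by
          gcongr
          exact hdist_le w' ((hpath l).2 hl) hlen
      _ ≤ _ := (hbd l).2
      _ ≤ _ := by
          gcongr
          omega

end Paper
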